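/- Let d ≥ 1, s ∈ (0,1), let Ω ⊂ ℝ^d be open and bounded, and let O ⊂ ℝ^d be open and bounded. Then there exists a constant C > 0, depending only on d, s, Ω and O, such that for every φ ∈ C_c^∞(Ω): ‖I_{1-s} φ‖_{L²(O)} + ‖∇(I_{1-s} φ)‖_{L²(O; ℝ^d)} ≤ C ( ‖φ‖_{L²(ℝ^d)} + ‖∇^s φ‖_{L²(ℝ^d; ℝ^d)} ). (Continuity of the Riesz potential from H^s_0(Ω) into H^1_loc(ℝ^d), stated on the dense subspace C_c^∞(Ω).) -/

import Mathlib

open MeasureTheory Filter Topology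

noncomputable section

/-- The normalising constant `μ_s` of the Riesz fractional operators. -/
def muS (d : ℕ) (s : ℝ) : ℝ :=
  2 ^ s * Real.pi ^ (-(d : ℝ) / 2) * Real.Gamma (((d : ℝ) + s + 1) / 2) /
    Real.Gamma ((1 - s) / 2)

/-- The Riesz fractional gradient `∇^s u (x)`. -/
def fracGrad (d : ℕ) (s : ℝ) (u : EuclideanSpace ℝ (Fin d) → ℝ)
    (x : EuclideanSpace ℝ (Fin d)) : EuclideanSpace ℝ (Fin d) :=
  muS d s • ∫ y, (‖x - y‖ ^ ((d : ℝ) + s + 1))⁻¹ • ((u x - u y) • (x - y))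

/-- The Riesz potential `I_α f (x)`. -/
def rieszPot (d : ℕ) (α : ℝ) (f : EuclideanSpace ℝ (Fin d) → ℝ)
    (x : EuclideanSpace ℝ (Fin d)) : ℝ :=
  (muS d (1 - α) / ((d : ℝ) - α)) * ∫ y, f y / ‖x - y‖ ^ ((d : ℝ) - α)

/-!
The gradient of `I_{1-s} φ` is `∇^s φ`. Indeed, replace the Riesz kernel `‖z‖ ^ (-p)`,
`p = d - 1 + s`, by the smooth kernel `(ε + ‖z‖²) ^ (-p / 2)` and integrate by parts in the
convolution with `∇φ`: the derivative of the kernel is odd, so it has integral zero and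
`φ (x - z)` may be replaced by `φ (x - z) - φ x`, whose vanishing at `z = 0` makes the limit
`ε → 0` absolutely convergent. The gradient term is thus at most `‖∇^s φ‖_{L²}`, which is finite
by Young's inequality, since `|∇^s φ|` is dominated by the indicator function of the support of
`φ` plus its convolution with the integrable kernel `min ‖z‖ 1 * ‖z‖ ^ (-(d + s))`. For the
zeroth-order term, only the values of the Riesz kernel on a ball matter for `x ∈ O` and `φ`
supported in `Ω`, the truncated kernel is integrable, and Young's inequality applies again.
-/

open scoped ENNReal NNReal Convolution

theorem lintegral_mul_rpow_le {α : Type*} [MeasurableSpace α] {μ : Measure α} {w f : α → ℝ≥0∞}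
    (hw : AEMeasurable w μ) (hf : AEMeasurable f μ) {p : ℝ} (hp : 1 ≤ p) :
    (∫⁻ a, w a * f a ∂μ) ^ p ≤ (∫⁻ a, w a ∂μ) ^ (p - 1) * ∫⁻ a, w a * f a ^ p ∂μ := by
  have hp0 : 0 < p := one_pos.trans_le hp
  have hfactor (a : α) : (w a * f a ^ p) ^ p⁻¹ * w a ^ (1 - p⁻¹) = w a * f a := by
    rw [ENNReal.mul_rpow_of_nonneg _ _ (inv_nonneg.2 hp0.le), ENNReal.rpow_rpow_inv hp0.ne',
      mul_right_comm, ← ENNReal.rpow_add_of_nonneg _ _ (inv_nonneg.2 hp0.le)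
        (sub_nonneg.2 (inv_le_one_of_one_le₀ hp)), add_sub_cancel, ENNReal.rpow_one]
  have hHolder := ENNReal.lintegral_mul_norm_pow_le (hw.mul (hf.pow_const p)) hw
    (inv_nonneg.2 hp0.le) (sub_nonneg.2 (inv_le_one_of_one_le₀ hp)) (add_sub_cancel p⁻¹ 1)
  simp only [Pi.mul_apply, hfactor] at hHolder
  calc (∫⁻ a, w a * f a ∂μ) ^ p
      ≤ ((∫⁻ a, w a * f a ^ p ∂μ) ^ p⁻¹ * (∫⁻ a, w a ∂μ) ^ (1 - p⁻¹)) ^ p := by gcongr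
    _ = (∫⁻ a, w a ∂μ) ^ (p - 1) * ∫⁻ a, w a * f a ^ p ∂μ := by
      rw [ENNReal.mul_rpow_of_nonneg _ _ hp0.le, ENNReal.rpow_inv_rpow hp0.ne',
        ← ENNReal.rpow_mul, sub_mul, inv_mul_cancel₀ hp0.ne', one_mul, mul_comm]

section Young

variable {G 𝕜 E F H : Type*} [NontriviallyNormedField 𝕜]
  [NormedAddCommGroup E] [NormedSpace 𝕜 E] [NormedAddCommGroup F] [NormedSpace 𝕜 F]
  [NormedAddCommGroup H] [NormedSpace 𝕜 H] [NormedSpace ℝ H]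
  [AddGroup G] [MeasurableSpace G] [MeasurableAdd₂ G] [MeasurableNeg G]
  {μ : Measure G} [SFinite μ] [μ.IsAddRightInvariant]

theorem enorm_convolution_rpow_le {f : G → E} {g : G → F} (L : E →L[𝕜] F →L[𝕜] H)
    (hf : AEStronglyMeasurable f μ) (hg : AEStronglyMeasurable g μ) {p : ℝ} (hp : 1 ≤ p) (x : G) :
    ‖(f ⋆[L, μ] g) x‖ₑ ^ p ≤
      ‖L‖ₑ ^ p * ((∫⁻ t, ‖f t‖ₑ ∂μ) ^ (p - 1) * ∫⁻ t, ‖f t‖ₑ * ‖g (x - t)‖ₑ ^ p ∂μ) := by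
  have hp0 : 0 ≤ p := zero_le_one.trans hp
  have hgx : AEMeasurable (fun t => ‖g (x - t)‖ₑ) μ :=
    (hg.comp_quasiMeasurePreserving
      (quasiMeasurePreserving_sub_left_of_right_invariant μ x)).enorm
  calc ‖(f ⋆[L, μ] g) x‖ₑ ^ p
      ≤ (∫⁻ t, ‖L‖ₑ * (‖f t‖ₑ * ‖g (x - t)‖ₑ) ∂μ) ^ p := by
        gcongr
        refine (enorm_integral_le_lintegral_enorm _).trans (lintegral_mono fun t => ?_)
        rw [← mul_assoc]
        exact L.le_opENorm₂ _ _
    _ = ‖L‖ₑ ^ p * (∫⁻ t, ‖f t‖ₑ * ‖g (x - t)‖ₑ ∂μ) ^ p := by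
        rw [lintegral_const_mul' _ _ enorm_ne_top, ENNReal.mul_rpow_of_nonneg _ _ hp0]
    _ ≤ _ := by gcongr; exact lintegral_mul_rpow_le hf.enorm hgx hp

theorem eLpNorm_convolution_le {f : G → E} {g : G → F} (L : E →L[𝕜] F →L[𝕜] H)
    (hf : AEStronglyMeasurable f μ) (hg : AEStronglyMeasurable g μ)
    {p : ℝ≥0∞} (hp : 1 ≤ p) (hp_top : p ≠ ∞) :
    eLpNorm (f ⋆[L, μ] g) p μ ≤ ‖L‖ₑ * eLpNorm f 1 μ * eLpNorm g p μ := by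
  set r := p.toReal
  have hr : 1 ≤ r := by simpa using ENNReal.toReal_mono hp_top hp
  have hr0 : 0 < r := one_pos.trans_le hr
  have hp0 : p ≠ 0 := (one_pos.trans_le hp).ne'
  have hfg : AEMeasurable (fun z : G × G => ‖f z.2‖ₑ * ‖g (z.1 - z.2)‖ₑ ^ r) (μ.prod μ) :=
    hf.enorm.comp_snd.mul ((hg.comp_quasiMeasurePreserving
      (quasiMeasurePreserving_sub_of_right_invariant μ μ)).enorm.pow_const r)
  have hTonelli : ∫⁻ x, ∫⁻ t, ‖f t‖ₑ * ‖g (x - t)‖ₑ ^ r ∂μ ∂μ =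
      (∫⁻ t, ‖f t‖ₑ ∂μ) * ∫⁻ x, ‖g x‖ₑ ^ r ∂μ := by
    rw [lintegral_lintegral_swap hfg, ← lintegral_mul_const'' _ hf.enorm]
    refine lintegral_congr fun t => ?_
    rw [lintegral_const_mul'' _ ?_, lintegral_sub_right_eq_self (fun x => ‖g x‖ₑ ^ r) t]
    exact (hg.comp_quasiMeasurePreserving
      (measurePreserving_sub_right μ t).quasiMeasurePreserving).enorm.pow_const r
  rw [eLpNorm_eq_lintegral_rpow_enorm_toReal hp0 hp_top,
    eLpNorm_eq_lintegral_rpow_enorm_toReal hp0 hp_top, eLpNorm_one_eq_lintegral_enorm,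
    one_div, ENNReal.rpow_inv_le_iff hr0, ENNReal.mul_rpow_of_nonneg _ _ hr0.le,
    ENNReal.mul_rpow_of_nonneg _ _ hr0.le, ENNReal.rpow_inv_rpow hr0.ne']
  set N := ∫⁻ t, ‖f t‖ₑ ∂μ
  calc ∫⁻ x, ‖(f ⋆[L, μ] g) x‖ₑ ^ r ∂μ
      ≤ ∫⁻ x, ‖L‖ₑ ^ r * (N ^ (r - 1) * ∫⁻ t, ‖f t‖ₑ * ‖g (x - t)‖ₑ ^ r ∂μ) ∂μ :=
        lintegral_mono fun x => enorm_convolution_rpow_le L hf hg hr x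
    _ = ‖L‖ₑ ^ r * (N ^ (r - 1) * (N * ∫⁻ x, ‖g x‖ₑ ^ r ∂μ)) := by
        have hinner := hfg.lintegral_prod_right'
        rw [lintegral_const_mul'' _ (hinner.const_mul _), lintegral_const_mul'' _ hinner, hTonelli]
    _ = ‖L‖ₑ ^ r * N ^ r * ∫⁻ x, ‖g x‖ₑ ^ r ∂μ := by
        rw [← mul_assoc (N ^ (r - 1)), ← mul_assoc]
        congr 2
        nth_rw 2 [← ENNReal.rpow_one N]
        rw [← ENNReal.rpow_add_of_nonneg _ _ (sub_nonneg.2 hr) zero_le_one, sub_add_cancel]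

end Young

section LocalYoung

variable {G 𝕜 E F H : Type*} [NontriviallyNormedField 𝕜]
  [NormedAddCommGroup E] [NormedSpace 𝕜 E] [NormedAddCommGroup F] [NormedSpace 𝕜 F]
  [NormedAddCommGroup H] [NormedSpace 𝕜 H] [NormedSpace ℝ H] [MeasurableSpace G]

theorem convolution_eq_indicator_convolution [AddGroup G] {μ : Measure G} {f : G → E} {g : G → F}
    (L : E →L[𝕜] F →L[𝕜] H) {S : Set G} {x : G}
    (hS : ∀ t, x - t ∈ Function.support g → t ∈ S) :
    (f ⋆[L, μ] g) x = (S.indicator f ⋆[L, μ] g) x := by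
  refine integral_congr_ae (Eventually.of_forall fun t => ?_)
  by_cases ht : t ∈ S
  · simp only [Set.indicator_of_mem ht]
  · have hg : g (x - t) = 0 := Function.notMem_support.1 (mt (hS t) ht)
    simp only [hg, map_zero]

theorem exists_eLpNorm_convolution_restrict_le [NormedAddCommGroup G] [ProperSpace G]
    [BorelSpace G] [SecondCountableTopology G] {μ : Measure G} [SFinite μ] [μ.IsAddRightInvariant]
    {f : G → E} (L : E →L[𝕜] F →L[𝕜] H) (hf : LocallyIntegrable f μ)
    {S T : Set G} (hS : Bornology.IsBounded S) (hT : Bornology.IsBounded T)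
    {p : ℝ≥0∞} (hp : 1 ≤ p) (hp_top : p ≠ ∞) :
    ∃ C : ℝ≥0, ∀ g : G → F, AEStronglyMeasurable g μ → Function.support g ⊆ T →
      eLpNorm (f ⋆[L, μ] g) p (μ.restrict S) ≤ C * eLpNorm g p μ := by
  obtain ⟨r, hr⟩ := hS.subset_closedBall 0
  obtain ⟨R, hR⟩ := hT.subset_closedBall 0
  set K : Set G := Metric.closedBall 0 (r + R)
  have hKf : Integrable (K.indicator f) μ :=
    (hf.integrableOn_isCompact (isCompact_closedBall _ _)).integrable_indicator
      Metric.isClosed_closedBall.measurableSet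
  refine ⟨(‖L‖ₑ * eLpNorm (K.indicator f) 1 μ).toNNReal, fun g hg hgT => ?_⟩
  have hconv : ∀ x ∈ Metric.closedBall (0 : G) r,
      (f ⋆[L, μ] g) x = (K.indicator f ⋆[L, μ] g) x := fun x hx => by
    refine convolution_eq_indicator_convolution L fun t ht => ?_
    have hxt := hR (hgT ht)
    rw [mem_closedBall_zero_iff] at hx hxt ⊢
    calc ‖t‖ = ‖x - (x - t)‖ := by rw [sub_sub_cancel]
      _ ≤ ‖x‖ + ‖x - t‖ := norm_sub_le _ _
      _ ≤ r + R := add_le_add hx hxt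
  rw [ENNReal.coe_toNNReal (ENNReal.mul_ne_top enorm_ne_top (memLp_one_iff_integrable.2 hKf).2.ne)]
  calc eLpNorm (f ⋆[L, μ] g) p (μ.restrict S)
      ≤ eLpNorm (f ⋆[L, μ] g) p (μ.restrict (Metric.closedBall 0 r)) :=
        eLpNorm_mono_measure _ (Measure.restrict_mono_set μ hr)
    _ = eLpNorm (K.indicator f ⋆[L, μ] g) p (μ.restrict (Metric.closedBall 0 r)) :=
        eLpNorm_congr_ae (ae_restrict_of_forall_mem Metric.isClosed_closedBall.measurableSet hconv)
    _ ≤ eLpNorm (K.indicator f ⋆[L, μ] g) p μ := eLpNorm_restrict_le _ _ _ _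
    _ ≤ ‖L‖ₑ * eLpNorm (K.indicator f) 1 μ * eLpNorm g p μ :=
        eLpNorm_convolution_le L hKf.aestronglyMeasurable hg hp hp_top

end LocalYoung

section LpNorm

variable {α E : Type*} [MeasurableSpace α] {μ : Measure α} [NormedAddCommGroup E]

theorem integral_norm_sq_rpow_half_eq_lpNorm {f : α → E} (hf : AEStronglyMeasurable f μ) :
    (∫ x, ‖f x‖ ^ 2 ∂μ) ^ ((1 : ℝ) / 2) = lpNorm f 2 μ := by
  simpa using (lpNorm_eq_integral_norm_rpow_toReal two_ne_zero ENNReal.ofNat_ne_top hf).symm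

theorem integral_sq_rpow_half_eq_lpNorm {f : α → ℝ} (hf : AEStronglyMeasurable f μ) :
    (∫ x, f x ^ 2 ∂μ) ^ ((1 : ℝ) / 2) = lpNorm f 2 μ := by
  simpa only [Real.norm_eq_abs, sq_abs] using integral_norm_sq_rpow_half_eq_lpNorm hf

theorem lpNorm_restrict_le {f : α → E} {p : ℝ≥0∞} (hf : MemLp f p μ) (S : Set α) :
    lpNorm f p (μ.restrict S) ≤ lpNorm f p μ := by
  rw [← toReal_eLpNorm hf.1, ← toReal_eLpNorm hf.1.restrict]
  exact ENNReal.toReal_mono hf.2.ne (eLpNorm_restrict_le _ _ _ _)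

end LpNorm

section Kernels

variable {E : Type*} [NormedAddCommGroup E]

/-- The regularisation `(ε + ‖z‖²) ^ (-p / 2)` of the kernel `‖z‖ ^ (-p)` of the Riesz potential.
It is smooth for `ε > 0` and has the same decay at infinity. -/
def regRieszKernel (p ε : ℝ) (z : E) : ℝ :=
  (ε + ‖z‖ ^ 2) ^ (-p / 2)

theorem regRieszKernel_neg (p ε : ℝ) (z : E) : regRieszKernel p ε (-z) = regRieszKernel p ε z := by
  simp only [regRieszKernel, norm_neg]

theorem regRieszKernel_nonneg (p : ℝ) {ε : ℝ} (hε : 0 ≤ ε) (z : E) : 0 ≤ regRieszKernel p ε z := by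
  unfold regRieszKernel
  positivity

theorem regRieszKernel_zero_right (p : ℝ) (z : E) : regRieszKernel p 0 z = ‖z‖ ^ (-p) := by
  rw [regRieszKernel, zero_add, ← Real.rpow_natCast, ← Real.rpow_mul (norm_nonneg z)]
  congr 1
  push_cast
  ring

theorem regRieszKernel_le_norm_rpow_neg {p ε : ℝ} (hp : 0 ≤ p) (hε : 0 ≤ ε) {z : E} (hz : z ≠ 0) :
    regRieszKernel p ε z ≤ ‖z‖ ^ (-p) := by
  have : 0 < ‖z‖ := norm_pos_iff.2 hz
  rw [← regRieszKernel_zero_right]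
  exact Real.rpow_le_rpow_of_nonpos (by positivity) (by linarith) (by linarith)

theorem tendsto_regRieszKernel (p : ℝ) {z : E} (hz : z ≠ 0) :
    Tendsto (fun ε => regRieszKernel p ε z) (𝓝 0) (𝓝 (‖z‖ ^ (-p))) := by
  have : 0 < ‖z‖ := norm_pos_iff.2 hz
  rw [← regRieszKernel_zero_right]
  exact ((tendsto_id.add_const (‖z‖ ^ 2)).rpow_const (Or.inl (by positivity)))

theorem regRieszKernel_add_one_mul_norm_le (p : ℝ) {ε : ℝ} (hε : 0 < ε) (z : E) :
    regRieszKernel (p + 1) ε z * ‖z‖ ≤ regRieszKernel p ε z := by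
  have hpos : 0 < ε + ‖z‖ ^ 2 := by positivity
  have hnorm : ‖z‖ ≤ (ε + ‖z‖ ^ 2) ^ (1 / 2 : ℝ) := by
    rw [← Real.sqrt_eq_rpow]
    exact Real.le_sqrt_of_sq_le (by linarith)
  calc regRieszKernel (p + 1) ε z * ‖z‖
      ≤ (ε + ‖z‖ ^ 2) ^ (-(p + 1) / 2) * (ε + ‖z‖ ^ 2) ^ (1 / 2 : ℝ) :=
        mul_le_mul_of_nonneg_left hnorm (regRieszKernel_nonneg _ hε.le z)
    _ = regRieszKernel p ε z := by
        rw [← Real.rpow_add hpos, regRieszKernel]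
        congr 1
        ring

theorem measurable_regRieszKernel [MeasurableSpace E] [OpensMeasurableSpace E]
    (p ε : ℝ) : Measurable (regRieszKernel p ε : E → ℝ) := by
  unfold regRieszKernel
  fun_prop

theorem min_norm_one_mul_norm_rpow_neg_le (p : ℝ) (z : E) :
    min ‖z‖ 1 * ‖z‖ ^ (-p) ≤ ‖z‖ ^ (-(p - 1)) := by
  rcases eq_or_ne z 0 with rfl | hz
  · rw [norm_zero, min_eq_left zero_le_one, zero_mul]
    positivity
  · calc min ‖z‖ 1 * ‖z‖ ^ (-p) ≤ ‖z‖ * ‖z‖ ^ (-p) := by gcongr; exact min_le_left _ _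
      _ = ‖z‖ ^ (-(p - 1)) := by
        rw [neg_sub, sub_eq_add_neg, Real.rpow_add (norm_pos_iff.2 hz), Real.rpow_one]

variable [NormedSpace ℝ E]

theorem regRieszKernel_eq_smul_dilation (p : ℝ) {ε : ℝ} (hε : 0 < ε) (z : E) :
    regRieszKernel p ε z = ε ^ (-p / 2) * (1 + ‖(√ε)⁻¹ • z‖ ^ 2) ^ (-p / 2) := by
  rw [← Real.mul_rpow hε.le (by positivity), regRieszKernel, norm_smul, mul_pow, norm_inv,
    Real.norm_of_nonneg (Real.sqrt_nonneg ε), inv_pow, Real.sq_sqrt hε.le, mul_add, mul_one,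
    mul_inv_cancel_left₀ hε.ne']

variable [FiniteDimensional ℝ E] [MeasurableSpace E] [BorelSpace E]
  {μ : Measure E} [μ.IsAddHaarMeasure]

theorem integrable_regRieszKernel {p ε : ℝ} (hp : Module.finrank ℝ E < p) (hε : 0 < ε) :
    Integrable (regRieszKernel p ε : E → ℝ) μ := by
  simp only [funext (regRieszKernel_eq_smul_dilation (E := E) p hε)]
  exact ((integrable_rpow_neg_one_add_norm_sq hp).comp_smul
    (inv_ne_zero (Real.sqrt_ne_zero'.2 hε))).const_mul _

theorem locallyIntegrable_norm_rpow_neg [Nontrivial E] {p : ℝ} (hp : p < Module.finrank ℝ E) :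
    LocallyIntegrable (fun z : E => ‖z‖ ^ (-p)) μ :=
  locallyIntegrable_of_norm_le_rpow (C := 1) Module.finrank_pos hp
    (Eventually.of_forall fun z => by
      rw [one_mul, Real.norm_of_nonneg (by positivity)])
    (Measurable.aestronglyMeasurable (by fun_prop))

theorem integrable_min_norm_one_mul_norm_rpow_neg [Nontrivial E] {p : ℝ}
    (hp : Module.finrank ℝ E < p) (hp' : p < Module.finrank ℝ E + 1) :
    Integrable (fun z : E => min ‖z‖ 1 * ‖z‖ ^ (-p)) μ := by
  have hlocal : LocallyIntegrable (fun z : E => min ‖z‖ 1 * ‖z‖ ^ (-p)) μ :=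
    (locallyIntegrable_norm_rpow_neg (sub_lt_iff_lt_add.2 hp')).mono
      (Measurable.aestronglyMeasurable (by fun_prop)) (Eventually.of_forall fun z => by
        rw [Real.norm_of_nonneg (by positivity), Real.norm_of_nonneg (by positivity)]
        exact min_norm_one_mul_norm_rpow_neg_le p z)
  refine hlocal.integrable_of_isBigO_cocompact (g := fun z => (1 + ‖z‖) ^ (-p)) ?_
    ((integrable_one_add_norm hp).integrableAtFilter _)
  refine Asymptotics.IsBigO.of_bound (2 ^ p) ?_
  filter_upwards [(tendsto_norm_cocompact_atTop (E := E)).eventually_ge_atTop 1] with z hz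
  have : 0 ≤ p := (Nat.cast_nonneg _).trans hp.le
  have hz0 : 0 < ‖z‖ := one_pos.trans_le hz
  rw [min_eq_right hz, one_mul, Real.norm_of_nonneg (by positivity),
    Real.norm_of_nonneg (by positivity)]
  calc ‖z‖ ^ (-p) = 2 ^ p * (2 * ‖z‖) ^ (-p) := by
        rw [Real.mul_rpow zero_le_two hz0.le, ← mul_assoc, ← Real.rpow_add two_pos, add_neg_cancel,
          Real.rpow_zero, one_mul]
    _ ≤ 2 ^ p * (1 + ‖z‖) ^ (-p) := by
        gcongr ?_ * ?_
        exact Real.rpow_le_rpow_of_nonpos (by positivity) (by linarith) (by linarith)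

theorem tendsto_integral_regRieszKernel_smul [Nontrivial E] {V : Type*} [NormedAddCommGroup V]
    [NormedSpace ℝ V] {p : ℝ} (hp : 0 ≤ p) {f : E → V} (hf : AEStronglyMeasurable f μ)
    (hpf : Integrable (fun z => ‖z‖ ^ (-p) • f z) μ) :
    Tendsto (fun ε => ∫ z, regRieszKernel p ε z • f z ∂μ) (𝓝[>] 0)
      (𝓝 (∫ z, ‖z‖ ^ (-p) • f z ∂μ)) := by
  have hne : ∀ᵐ z ∂μ, z ≠ 0 := Measure.ae_ne μ 0
  refine tendsto_integral_filter_of_dominated_convergence _ (Eventually.of_forall fun ε =>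
    (measurable_regRieszKernel p ε).aestronglyMeasurable.smul hf) ?_ hpf.norm ?_
  · filter_upwards [self_mem_nhdsWithin] with ε hε
    filter_upwards [hne] with z hz
    rw [norm_smul, norm_smul, Real.norm_of_nonneg (regRieszKernel_nonneg p hε.le z),
      Real.norm_of_nonneg (by positivity)]
    gcongr
    exact regRieszKernel_le_norm_rpow_neg hp hε.le hz
  · filter_upwards [hne] with z hz
    exact ((tendsto_regRieszKernel p hz).mono_left nhdsWithin_le_nhds).smul_const _

end Kernels

theorem fderiv_comp_const_sub {𝕜 E F : Type*} [NontriviallyNormedField 𝕜] [NormedAddCommGroup E]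
    [NormedSpace 𝕜 E] [NormedAddCommGroup F] [NormedSpace 𝕜 F] (f : E → F) (x z : E) :
    fderiv 𝕜 (fun z => f (x - z)) z = -fderiv 𝕜 f (x - z) := by
  have hcomp : (fun z => f (x - z)) =
      (fun w => f (x + w)) ∘ ContinuousLinearEquiv.neg 𝕜 (M := E) :=
    funext fun z => by simp [sub_eq_add_neg]
  rw [hcomp, ContinuousLinearEquiv.comp_right_fderiv, fderiv_comp_add_left]
  ext v
  simp [sub_eq_add_neg]

section IntegrationByParts

variable {E : Type*} [NormedAddCommGroup E]

theorem integral_fderiv_apply_eq_zero_of_even [NormedSpace ℝ E] [MeasurableSpace E]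
    [MeasurableNeg E] {μ : Measure E} [μ.IsNegInvariant] {K : E → ℝ} (hK : ∀ z, K (-z) = K z)
    (v : E) : ∫ z, fderiv ℝ K z v ∂μ = 0 := by
  have hodd (z : E) : fderiv ℝ K (-z) v = -fderiv ℝ K z v := by
    have h := DFunLike.congr_fun (fderiv_comp_const_sub (𝕜 := ℝ) K 0 z) v
    simp only [zero_sub, hK, neg_apply] at h
    linarith
  have h := integral_neg_eq_self (fun z => fderiv ℝ K z v) μ
  simp only [hodd, integral_neg] at h
  linarith

theorem integral_mul_fderiv_const_sub_of_even [NormedSpace ℝ E] [FiniteDimensional ℝ E]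
    [MeasurableSpace E] [BorelSpace E] {μ : Measure E} [μ.IsAddHaarMeasure] {K φ : E → ℝ}
    (hK : ContDiff ℝ 1 K) (hK_even : ∀ z, K (-z) = K z) (hφ : ContDiff ℝ 1 φ)
    (hc : HasCompactSupport φ) {x v : E} (hKv : Integrable (fun z => fderiv ℝ K z v) μ) :
    ∫ z, K z * fderiv ℝ φ (x - z) v ∂μ = -∫ z, fderiv ℝ K z v * (φ x - φ (x - z)) ∂μ := by
  have hφx : Continuous fun z => φ (x - z) := by have := hφ.continuous; fun_prop
  have hφx' : Continuous fun z => fderiv ℝ φ (x - z) v := by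
    have := hφ.continuous_fderiv_apply one_ne_zero
    fun_prop
  have hcx : HasCompactSupport fun z => φ (x - z) := hc.comp_homeomorph (Homeomorph.subLeft x)
  have hcx' : HasCompactSupport fun z => fderiv ℝ φ (x - z) v :=
    (hc.fderiv_apply ℝ v).comp_homeomorph (Homeomorph.subLeft x)
  have hKv_cont : Continuous fun z => fderiv ℝ K z v :=
    (hK.continuous_fderiv one_ne_zero).clm_apply continuous_const
  have hint : Integrable (fun z => fderiv ℝ K z v * φ (x - z)) μ :=
    (hKv_cont.mul hφx).integrable_of_hasCompactSupport hcx.mul_left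
  have hparts := integral_mul_fderiv_eq_neg_fderiv_mul_of_integrable (μ := μ) (f := K)
    (g := fun z => φ (x - z)) (v := v) hint
    (by
      simp only [fderiv_comp_const_sub, neg_apply, mul_neg]
      exact ((hK.continuous.mul hφx').integrable_of_hasCompactSupport hcx'.mul_left).neg)
    ((hK.continuous.mul hφx).integrable_of_hasCompactSupport hcx.mul_left)
    (fun z _ => hK.differentiable one_ne_zero z)
    (fun z _ => ((hφ.differentiable one_ne_zero).comp (by fun_prop : Differentiable ℝ (x - ·))) z)
  simp only [fderiv_comp_const_sub, neg_apply, mul_neg, integral_neg, neg_inj] at hparts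
  simp only [mul_sub]
  rw [integral_sub (hKv.mul_const _) hint, integral_mul_const,
    integral_fderiv_apply_eq_zero_of_even hK_even, zero_mul, zero_sub, neg_neg, hparts]

variable [InnerProductSpace ℝ E]

theorem contDiff_regRieszKernel (p : ℝ) {ε : ℝ} (hε : 0 < ε) {k : WithTop ℕ∞} :
    ContDiff ℝ k (regRieszKernel p ε : E → ℝ) :=
  (contDiff_const.add (contDiff_norm_sq ℝ)).rpow_const_of_ne fun _ => by positivity

theorem fderiv_regRieszKernel_apply (p : ℝ) {ε : ℝ} (hε : 0 < ε) (z v : E) :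
    fderiv ℝ (regRieszKernel p ε) z v = -p * (regRieszKernel (p + 2) ε z * inner ℝ z v) := by
  have hnorm : HasFDerivAt (fun z : E => ε + ‖z‖ ^ 2) (2 • innerSL ℝ z) z :=
    (hasStrictFDerivAt_norm_sq z).hasFDerivAt.const_add ε
  have hexp : -(p + 2) / 2 = -p / 2 - 1 := by ring
  have hderiv : HasFDerivAt (regRieszKernel p ε : E → ℝ) _ z :=
    hnorm.rpow_const (p := -p / 2) (Or.inl (by positivity))
  rw [hderiv.fderiv, regRieszKernel, hexp]
  simp only [smul_apply, innerSL_apply_apply, smul_eq_mul, nsmul_eq_mul, Nat.cast_ofNat]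
  ring

theorem integrable_regRieszKernel_mul_inner [FiniteDimensional ℝ E] [MeasurableSpace E]
    [BorelSpace E] {μ : Measure E} [μ.IsAddHaarMeasure] {p ε : ℝ}
    (hp : Module.finrank ℝ E + 1 < p) (hε : 0 < ε) (v : E) :
    Integrable (fun z => regRieszKernel p ε z * inner ℝ z v) μ := by
  refine ((integrable_regRieszKernel (lt_sub_iff_add_lt.2 hp) hε).mul_const ‖v‖).mono'
    ((measurable_regRieszKernel p ε).mul (by fun_prop)).aestronglyMeasurable
    (Eventually.of_forall fun z => ?_)
  have hle := regRieszKernel_add_one_mul_norm_le (p - 1) hε z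
  rw [sub_add_cancel] at hle
  calc ‖regRieszKernel p ε z * inner ℝ z v‖
      = regRieszKernel p ε z * ‖(inner ℝ z v : ℝ)‖ := by
        rw [norm_mul, Real.norm_of_nonneg (regRieszKernel_nonneg p hε.le z)]
    _ ≤ regRieszKernel p ε z * (‖z‖ * ‖v‖) :=
        mul_le_mul_of_nonneg_left (norm_inner_le_norm z v) (regRieszKernel_nonneg p hε.le z)
    _ ≤ regRieszKernel (p - 1) ε z * ‖v‖ := by
        rw [← mul_assoc]
        gcongr

end IntegrationByParts

theorem integrable_mul_indicator_const_sub {G : Type*} [AddGroup G] [MeasurableSpace G]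
    [MeasurableSub G] {μ : Measure G} {k : G → ℝ} (hk : Integrable k μ) {S : Set G}
    (hS : MeasurableSet S) (x : G) : Integrable (fun z => k z * S.indicator 1 (x - z)) μ := by
  refine (hk.indicator (hS.preimage (measurable_id.const_sub x))).congr
    (Eventually.of_forall fun z => ?_)
  by_cases hz : x - z ∈ S <;> simp [Set.indicator, hz]

section FractionalGradient

variable {E : Type*} [NormedAddCommGroup E]

theorem norm_sub_le_mul_min_norm_one {F : Type*} [NormedAddCommGroup F] {f : E → F} {K : ℝ≥0}
    {M : ℝ} (hf : LipschitzWith K f) (hM : ∀ x, ‖f x‖ ≤ M) (x z : E) :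
    ‖f x - f (x - z)‖ ≤ max (K : ℝ) (2 * M) * min ‖z‖ 1 := by
  rcases le_total ‖z‖ 1 with hz | hz
  · rw [min_eq_left hz]
    calc ‖f x - f (x - z)‖ ≤ K * ‖x - (x - z)‖ := hf.norm_sub_le x (x - z)
      _ ≤ max (K : ℝ) (2 * M) * ‖z‖ := by
        rw [sub_sub_cancel]
        gcongr
        exact le_max_left _ _
  · rw [min_eq_right hz, mul_one]
    calc ‖f x - f (x - z)‖ ≤ ‖f x‖ + ‖f (x - z)‖ := norm_sub_le _ _
      _ ≤ 2 * M := by linarith [hM x, hM (x - z)]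
      _ ≤ max (K : ℝ) (2 * M) := le_max_right _ _

variable [NormedSpace ℝ E]

/-- The integrand of the Riesz fractional gradient of `u` at `x` in the variable `z = x - y`.
The order `s` of the gradient corresponds to the exponent `q = d + s + 1` in dimension `d`. -/
def fracGradIntegrand (q : ℝ) (u : E → ℝ) (x z : E) : E :=
  ‖z‖ ^ (-q) • (u x - u (x - z)) • z

theorem norm_fracGradIntegrand (q : ℝ) (u : E → ℝ) (x z : E) :
    ‖fracGradIntegrand q u x z‖ = ‖u x - u (x - z)‖ * ‖z‖ ^ (-(q - 1)) := by
  rcases eq_or_ne z 0 with rfl | hz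
  · simp [fracGradIntegrand]
  · rw [fracGradIntegrand, norm_smul, norm_smul, Real.norm_of_nonneg (by positivity), neg_sub,
      sub_eq_add_neg 1 q, Real.rpow_add (norm_pos_iff.2 hz), Real.rpow_one]
    ring

theorem exists_norm_fracGradIntegrand_le {φ : E → ℝ} {K : ℝ≥0} (hφ : LipschitzWith K φ)
    (hc : HasCompactSupport φ) (q : ℝ) :
    ∃ A : ℝ, ∀ x z, ‖fracGradIntegrand q φ x z‖ ≤
      A * (min ‖z‖ 1 * ‖z‖ ^ (-(q - 1)) *
        ((tsupport φ).indicator 1 x + (tsupport φ).indicator 1 (x - z))) := by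
  obtain ⟨M, hM⟩ := hc.exists_bound_of_continuous hφ.continuous
  refine ⟨max (K : ℝ) (2 * M), fun x z => ?_⟩
  have hind_nonneg (y : E) : (0 : ℝ) ≤ (tsupport φ).indicator 1 y :=
    Set.indicator_nonneg (fun _ _ => zero_le_one) y
  have hnonneg : 0 ≤ max (K : ℝ) (2 * M) * (min ‖z‖ 1 * ‖z‖ ^ (-(q - 1))) := by positivity
  rw [norm_fracGradIntegrand, ← mul_assoc]
  by_cases hxz : φ x = 0 ∧ φ (x - z) = 0
  · rw [hxz.1, hxz.2, sub_self, norm_zero, zero_mul]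
    exact mul_nonneg hnonneg (add_nonneg (hind_nonneg x) (hind_nonneg (x - z)))
  · have hone : (1 : ℝ) ≤ (tsupport φ).indicator 1 x + (tsupport φ).indicator 1 (x - z) := by
      rcases not_and_or.1 hxz with h | h
      · rw [Set.indicator_of_mem (subset_tsupport φ h), Pi.one_apply]
        exact le_add_of_nonneg_right (hind_nonneg _)
      · rw [Set.indicator_of_mem (subset_tsupport φ h), Pi.one_apply]
        exact le_add_of_nonneg_left (hind_nonneg _)
    refine le_trans ?_ (le_mul_of_one_le_right hnonneg hone)
    rw [← mul_assoc]
    gcongr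
    exact norm_sub_le_mul_min_norm_one hφ hM x z

variable [MeasurableSpace E] [BorelSpace E]

theorem measurable_fracGradIntegrand [SecondCountableTopology E] {u : E → ℝ} (hu : Measurable u)
    (q : ℝ) : Measurable fun z : E × E => fracGradIntegrand q u z.1 z.2 := by
  unfold fracGradIntegrand
  fun_prop

variable [FiniteDimensional ℝ E] [Nontrivial E] {μ : Measure E} [μ.IsAddHaarMeasure]

theorem integrable_fracGradIntegrand {q : ℝ} (hq : Module.finrank ℝ E + 1 < q)
    (hq' : q < Module.finrank ℝ E + 2) {φ : E → ℝ} {K : ℝ≥0} (hφ : LipschitzWith K φ)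
    (hc : HasCompactSupport φ) (x : E) : Integrable (fracGradIntegrand q φ x) μ := by
  obtain ⟨A, hA⟩ := exists_norm_fracGradIntegrand_le hφ hc q
  have hk : Integrable (fun z : E => min ‖z‖ 1 * ‖z‖ ^ (-(q - 1))) μ :=
    integrable_min_norm_one_mul_norm_rpow_neg (by linarith) (by linarith)
  have hmajor := ((hk.mul_const ((tsupport φ).indicator 1 x)).add
    (integrable_mul_indicator_const_sub hk (isClosed_tsupport φ).measurableSet x)).const_mul A
  refine hmajor.mono' ((measurable_fracGradIntegrand hφ.continuous.measurable q).comp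
    measurable_prodMk_left).aestronglyMeasurable (Eventually.of_forall fun z => ?_)
  simpa only [Pi.add_apply, mul_add] using hA x z

theorem memLp_integral_fracGradIntegrand {q : ℝ} (hq : Module.finrank ℝ E + 1 < q)
    (hq' : q < Module.finrank ℝ E + 2) {φ : E → ℝ} {K : ℝ≥0} (hφ : LipschitzWith K φ)
    (hc : HasCompactSupport φ) {p : ℝ≥0∞} (hp : 1 ≤ p) (hp_top : p ≠ ∞) :
    MemLp (fun x => ∫ z, fracGradIntegrand q φ x z ∂μ) p μ := by
  obtain ⟨A, hA⟩ := exists_norm_fracGradIntegrand_le hφ hc q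
  set k : E → ℝ := fun z => min ‖z‖ 1 * ‖z‖ ^ (-(q - 1))
  set χ : E → ℝ := (tsupport φ).indicator 1
  have hk : Integrable k μ :=
    integrable_min_norm_one_mul_norm_rpow_neg (by linarith) (by linarith)
  have hS : MeasurableSet (tsupport φ) := (isClosed_tsupport φ).measurableSet
  have hχ (r : ℝ≥0∞) : MemLp χ r μ := memLp_indicator_const r hS 1 (Or.inr hc.measure_lt_top.ne)
  have hYoung : MemLp (k ⋆[ContinuousLinearMap.mul ℝ ℝ, μ] χ) p μ :=
    ⟨(hk.integrable_convolution _ (memLp_one_iff_integrable.1 (hχ 1))).aestronglyMeasurable,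
      (eLpNorm_convolution_le _ hk.aestronglyMeasurable (hχ p).1 hp hp_top).trans_lt
        (ENNReal.mul_lt_top (ENNReal.mul_lt_top enorm_lt_top (memLp_one_iff_integrable.2 hk).2)
          (hχ p).2)⟩
  have hmajor : MemLp (fun x => A * ((∫ z, k z ∂μ) * χ x +
      (k ⋆[ContinuousLinearMap.mul ℝ ℝ, μ] χ) x)) p μ :=
    (((hχ p).const_mul _).add hYoung).const_mul A
  refine hmajor.mono' (measurable_fracGradIntegrand hφ.continuous.measurable
    q).aestronglyMeasurable.integral_prod_right' (Eventually.of_forall fun x => ?_)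
  have hkx := hk.mul_const (χ x)
  have hkx' := integrable_mul_indicator_const_sub hk hS x
  calc ‖∫ z, fracGradIntegrand q φ x z ∂μ‖
      ≤ ∫ z, A * (k z * χ x + k z * χ (x - z)) ∂μ :=
        norm_integral_le_of_norm_le ((hkx.add hkx').const_mul A)
          (Eventually.of_forall fun z => by simpa only [mul_add] using hA x z)
    _ = A * ((∫ z, k z ∂μ) * χ x + (k ⋆[ContinuousLinearMap.mul ℝ ℝ, μ] χ) x) := by
        rw [integral_const_mul, integral_add hkx hkx', integral_mul_const]
        rfl

end FractionalGradient

section KernelIdentity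

variable {E : Type*} [NormedAddCommGroup E] [InnerProductSpace ℝ E] [FiniteDimensional ℝ E]
  [MeasurableSpace E] [BorelSpace E] {μ : Measure E} [μ.IsAddHaarMeasure]

theorem integral_regRieszKernel_mul_fderiv_eq {p ε : ℝ} (hp : Module.finrank ℝ E < p + 1)
    (hε : 0 < ε) {φ : E → ℝ} (hφ : ContDiff ℝ 1 φ) (hc : HasCompactSupport φ) (x v : E) :
    ∫ z, regRieszKernel p ε z * fderiv ℝ φ (x - z) v ∂μ =
      p * ∫ z, regRieszKernel (p + 2) ε z * (inner ℝ z v * (φ x - φ (x - z))) ∂μ := by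
  have hderiv := fderiv_regRieszKernel_apply (E := E) p hε
  have hint : Integrable (fun z => fderiv ℝ (regRieszKernel p ε) z v) μ := by
    simp only [hderiv]
    exact (integrable_regRieszKernel_mul_inner (by linarith) hε v).const_mul (-p)
  rw [integral_mul_fderiv_const_sub_of_even (contDiff_regRieszKernel p hε) (regRieszKernel_neg p ε)
    hφ hc hint]
  simp only [hderiv, mul_assoc, integral_const_mul, neg_mul, neg_neg, integral_neg]

theorem integral_norm_rpow_neg_mul_fderiv_eq [Nontrivial E] {p : ℝ}
    (hp : Module.finrank ℝ E < p + 1) (hp' : p < Module.finrank ℝ E) {φ : E → ℝ}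
    (hφ : ContDiff ℝ 1 φ) (hc : HasCompactSupport φ) (x v : E) :
    ∫ z, ‖z‖ ^ (-p) * fderiv ℝ φ (x - z) v ∂μ =
      p * inner ℝ v (∫ z, fracGradIntegrand (p + 2) φ x z ∂μ) := by
  have hp0 : 0 ≤ p := by
    have : (1 : ℝ) ≤ Module.finrank ℝ E := by exact_mod_cast Module.finrank_pos
    linarith
  obtain ⟨K, hK⟩ := hφ.lipschitzWith_of_hasCompactSupport hc one_ne_zero
  have hfrac : Integrable (fracGradIntegrand (p + 2) φ x) μ :=
    integrable_fracGradIntegrand (by linarith) (by linarith) hK hc x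
  have hinner (z : E) : inner ℝ v (fracGradIntegrand (p + 2) φ x z) =
      ‖z‖ ^ (-(p + 2)) * (inner ℝ z v * (φ x - φ (x - z))) := by
    rw [fracGradIntegrand, inner_smul_right, inner_smul_right, real_inner_comm,
      mul_comm (inner ℝ z v)]
  have hφ_cont := hφ.continuous
  have hφ' : Continuous fun z => fderiv ℝ φ z v := by
    have := hφ.continuous_fderiv_apply one_ne_zero
    fun_prop
  have hleft := tendsto_integral_regRieszKernel_smul hp0 (f := fun z => fderiv ℝ φ (x - z) v)
    (Continuous.aestronglyMeasurable (by fun_prop))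
    ((hc.fderiv_apply ℝ v).convolutionExists_right (ContinuousLinearMap.mul ℝ ℝ)
      (locallyIntegrable_norm_rpow_neg (μ := μ) hp') hφ' x)
  have hright := tendsto_integral_regRieszKernel_smul (μ := μ) (p := p + 2) (by linarith)
    (f := fun z => inner ℝ z v * (φ x - φ (x - z)))
    (Continuous.aestronglyMeasurable (by fun_prop))
    ((hfrac.const_inner v).congr (Eventually.of_forall hinner))
  rw [← integral_inner hfrac, integral_congr_ae (Eventually.of_forall hinner)]
  refine tendsto_nhds_unique hleft ((hright.const_mul p).congr' ?_)
  filter_upwards [self_mem_nhdsWithin] with ε hε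
  exact (integral_regRieszKernel_mul_fderiv_eq hp hε hφ hc x v).symm

end KernelIdentity

section RieszPotential

variable {d : ℕ}

theorem rieszPot_eq_smul_convolution (α : ℝ) (f : EuclideanSpace ℝ (Fin d) → ℝ) :
    rieszPot d α f = (muS d (1 - α) / (d - α)) •
      ((fun z => ‖z‖ ^ (-(d - α))) ⋆[ContinuousLinearMap.mul ℝ ℝ, volume] f) := by
  ext x
  rw [Pi.smul_apply, smul_eq_mul, convolution_eq_swap, rieszPot]
  congr 2 with y
  rw [ContinuousLinearMap.mul_apply', Real.rpow_neg (norm_nonneg _), div_eq_inv_mul]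

theorem fracGrad_eq_smul_integral_fracGradIntegrand (s : ℝ) (u : EuclideanSpace ℝ (Fin d) → ℝ)
    (x : EuclideanSpace ℝ (Fin d)) :
    fracGrad d s u x = muS d s • ∫ z, fracGradIntegrand (d + s + 1) u x z := by
  rw [fracGrad, ← integral_sub_left_eq_self _ volume x]
  simp only [fracGradIntegrand, sub_sub_cancel, Real.rpow_neg (norm_nonneg _)]

theorem exists_eLpNorm_rieszPot_restrict_le [NeZero d] {α : ℝ} (hα : 0 < α)
    {Ω O : Set (EuclideanSpace ℝ (Fin d))} (hΩ : Bornology.IsBounded Ω)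
    (hO : Bornology.IsBounded O) {p : ℝ≥0∞} (hp : 1 ≤ p) (hp_top : p ≠ ∞) :
    ∃ C : ℝ≥0, ∀ f : EuclideanSpace ℝ (Fin d) → ℝ, AEStronglyMeasurable f volume →
      Function.support f ⊆ Ω →
      eLpNorm (rieszPot d α f) p (volume.restrict O) ≤ C * eLpNorm f p volume := by
  obtain ⟨C, hC⟩ := exists_eLpNorm_convolution_restrict_le (F := ℝ) (ContinuousLinearMap.mul ℝ ℝ)
    (locallyIntegrable_norm_rpow_neg (E := EuclideanSpace ℝ (Fin d)) (μ := volume)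
      (p := d - α) (by simpa using hα)) hO hΩ hp hp_top
  refine ⟨‖muS d (1 - α) / (d - α)‖₊ * C, fun f hf hfΩ => ?_⟩
  rw [rieszPot_eq_smul_convolution, eLpNorm_const_smul, ENNReal.coe_mul, mul_assoc]
  exact mul_le_mul_right (hC f hf hfΩ) _

variable [NeZero d] {φ : EuclideanSpace ℝ (Fin d) → ℝ}

theorem continuous_rieszPot {α : ℝ} (hα : 0 < α) (hφ : Continuous φ) (hc : HasCompactSupport φ) :
    Continuous (rieszPot d α φ) := by
  rw [rieszPot_eq_smul_convolution]
  exact (hc.continuous_convolution_right _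
    (locallyIntegrable_norm_rpow_neg (by simpa using hα)) hφ).const_smul _

theorem gradient_rieszPot {s : ℝ} (hs : s ∈ Set.Ioo (0 : ℝ) 1) (hφ : ContDiff ℝ 1 φ)
    (hc : HasCompactSupport φ) : gradient (rieszPot d (1 - s) φ) = fracGrad d s φ := by
  set p : ℝ := d - (1 - s)
  have hd : (1 : ℝ) ≤ d := by exact_mod_cast NeZero.one_le
  have hp0 : 0 < p := by linarith [hs.1]
  have hlower : Module.finrank ℝ (EuclideanSpace ℝ (Fin d)) < p + 1 := by
    rw [finrank_euclideanSpace_fin]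
    linarith [hs.1]
  have hupper : p < Module.finrank ℝ (EuclideanSpace ℝ (Fin d)) := by
    rw [finrank_euclideanSpace_fin]
    linarith [hs.2]
  have hexp : p + 2 = d + s + 1 := by ring
  have hkernel : LocallyIntegrable (fun z : EuclideanSpace ℝ (Fin d) => ‖z‖ ^ (-p)) volume :=
    locallyIntegrable_norm_rpow_neg hupper
  ext1 x
  refine ext_inner_left ℝ fun v => ?_
  have hderiv := (hc.hasFDerivAt_convolution_right (ContinuousLinearMap.mul ℝ ℝ) hkernel hφ
    x).const_smul (muS d (1 - (1 - s)) / p)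
  calc inner ℝ v (gradient (rieszPot d (1 - s) φ) x)
      = muS d s / p * ∫ z, ‖z‖ ^ (-p) * fderiv ℝ φ (x - z) v := by
        rw [real_inner_comm, gradient, InnerProductSpace.toDual_symm_apply,
          rieszPot_eq_smul_convolution, hderiv.fderiv, smul_apply,
          convolution_precompR_apply _ hkernel (hc.fderiv ℝ) (hφ.continuous_fderiv one_ne_zero),
          sub_sub_cancel]
        rfl
    _ = inner ℝ v (fracGrad d s φ x) := by
        rw [integral_norm_rpow_neg_mul_fderiv_eq hlower hupper hφ hc, ← mul_assoc,
          div_mul_cancel₀ _ hp0.ne', fracGrad_eq_smul_integral_fracGradIntegrand,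
          inner_smul_right, hexp]

theorem memLp_fracGrad {s : ℝ} (hs : s ∈ Set.Ioo (0 : ℝ) 1) {K : ℝ≥0} (hφ : LipschitzWith K φ)
    (hc : HasCompactSupport φ) {p : ℝ≥0∞} (hp : 1 ≤ p) (hp_top : p ≠ ∞) :
    MemLp (fracGrad d s φ) p volume := by
  rw [funext (fracGrad_eq_smul_integral_fracGradIntegrand s φ)]
  have hlower : Module.finrank ℝ (EuclideanSpace ℝ (Fin d)) + 1 < d + s + 1 := by
    rw [finrank_euclideanSpace_fin]
    linarith [hs.1]
  have hupper : d + s + 1 < Module.finrank ℝ (EuclideanSpace ℝ (Fin d)) + 2 := by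
    rw [finrank_euclideanSpace_fin]
    linarith [hs.2]
  exact (memLp_integral_fracGradIntegrand hlower hupper hφ hc hp hp_top).const_smul (muS d s)

theorem exists_lpNorm_rieszPot_restrict_le {α : ℝ} (hα : 0 < α)
    {Ω O : Set (EuclideanSpace ℝ (Fin d))} (hΩ : Bornology.IsBounded Ω)
    (hO : Bornology.IsBounded O) {p : ℝ≥0∞} (hp : 1 ≤ p) (hp_top : p ≠ ∞) :
    ∃ C : ℝ, 0 ≤ C ∧ ∀ φ : EuclideanSpace ℝ (Fin d) → ℝ, Continuous φ → HasCompactSupport φ →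
      tsupport φ ⊆ Ω → lpNorm (rieszPot d α φ) p (volume.restrict O) ≤ C * lpNorm φ p volume := by
  obtain ⟨C, hC⟩ := exists_eLpNorm_rieszPot_restrict_le hα hΩ hO hp hp_top
  refine ⟨C, C.2, fun φ hφ hc hφΩ => ?_⟩
  rw [← toReal_eLpNorm (continuous_rieszPot hα hφ hc).aestronglyMeasurable,
    ← toReal_eLpNorm hφ.aestronglyMeasurable, ← ENNReal.coe_toReal, ← ENNReal.toReal_mul]
  exact ENNReal.toReal_mono
    (ENNReal.mul_ne_top ENNReal.coe_ne_top (hφ.memLp_of_hasCompactSupport hc).2.ne)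
    (hC φ hφ.aestronglyMeasurable ((subset_tsupport φ).trans hφΩ))

end RieszPotential

theorem stmt3_general (d : ℕ) (hd : 1 ≤ d) (s : ℝ) (hs : s ∈ Set.Ioo (0 : ℝ) 1)
    (Ω O : Set (EuclideanSpace ℝ (Fin d)))
    (hΩb : Bornology.IsBounded Ω) (hOb : Bornology.IsBounded O) :
    ∃ C : ℝ, 0 < C ∧
      ∀ φ : EuclideanSpace ℝ (Fin d) → ℝ,
        ContDiff ℝ 1 φ → HasCompactSupport φ → tsupport φ ⊆ Ω →
        (∫ x in O, (rieszPot d (1 - s) φ x) ^ 2) ^ ((1 : ℝ) / 2) +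
            (∫ x in O, ‖gradient (rieszPot d (1 - s) φ) x‖ ^ 2) ^ ((1 : ℝ) / 2) ≤
          C * ((∫ x, (φ x) ^ 2) ^ ((1 : ℝ) / 2) +
            (∫ x, ‖fracGrad d s φ x‖ ^ 2) ^ ((1 : ℝ) / 2)) := by
  have : NeZero d := ⟨Nat.one_le_iff_ne_zero.1 hd⟩
  have hα : 0 < 1 - s := sub_pos.2 hs.2
  obtain ⟨C, hC0, hC⟩ := exists_lpNorm_rieszPot_restrict_le hα hΩb hOb one_le_two
    ENNReal.ofNat_ne_top
  refine ⟨C + 1, by positivity, fun φ hφ hc hφΩ => ?_⟩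
  obtain ⟨K, hK⟩ := hφ.lipschitzWith_of_hasCompactSupport hc one_ne_zero
  have hfrac : MemLp (fracGrad d s φ) 2 volume :=
    memLp_fracGrad hs hK hc one_le_two ENNReal.ofNat_ne_top
  rw [gradient_rieszPot hs hφ hc, integral_norm_sq_rpow_half_eq_lpNorm hfrac.1,
    integral_norm_sq_rpow_half_eq_lpNorm hfrac.1.restrict,
    integral_sq_rpow_half_eq_lpNorm hφ.continuous.aestronglyMeasurable,
    integral_sq_rpow_half_eq_lpNorm (continuous_rieszPot hα hφ.continuous hc).aestronglyMeasurable]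
  calc lpNorm (rieszPot d (1 - s) φ) 2 (volume.restrict O) +
        lpNorm (fracGrad d s φ) 2 (volume.restrict O)
      ≤ C * lpNorm φ 2 volume + lpNorm (fracGrad d s φ) 2 volume :=
        add_le_add (hC φ hφ.continuous hc hφΩ) (lpNorm_restrict_le hfrac O)
    _ ≤ (C + 1) * (lpNorm φ 2 volume + lpNorm (fracGrad d s φ) 2 volume) := by
        have hφ0 : 0 ≤ lpNorm φ 2 volume := lpNorm_nonneg
        have hfrac0 : 0 ≤ lpNorm (fracGrad d s φ) 2 volume := lpNorm_nonneg
        linarith [mul_nonneg hC0 hfrac0]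

/-- Continuity of the Riesz potential `I_{1-s} : H^s_0(Ω) → H^1_loc(ℝ^d)`, stated on
the dense subspace `C_c^∞(Ω)`. -/
theorem stmt3 (d : ℕ) (hd : 1 ≤ d) (s : ℝ) (hs : s ∈ Set.Ioo (0 : ℝ) 1)
    (Ω O : Set (EuclideanSpace ℝ (Fin d)))
    (hΩo : IsOpen Ω) (hΩb : Bornology.IsBounded Ω)
    (hOo : IsOpen O) (hOb : Bornology.IsBounded O) :
    ∃ C : ℝ, 0 < C ∧
      ∀ φ : EuclideanSpace ℝ (Fin d) → ℝ,
        ContDiff ℝ (⊤ : ℕ∞) φ → HasCompactSupport φ → tsupport φ ⊆ Ω →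
        (∫ x in O, (rieszPot d (1 - s) φ x) ^ 2) ^ ((1 : ℝ) / 2) +
            (∫ x in O, ‖gradient (rieszPot d (1 - s) φ) x‖ ^ 2) ^ ((1 : ℝ) / 2) ≤
          C * ((∫ x, (φ x) ^ 2) ^ ((1 : ℝ) / 2) +
            (∫ x, ‖fracGrad d s φ x‖ ^ 2) ^ ((1 : ℝ) / 2)) := by
  obtain ⟨C, hC0, hC⟩ := stmt3_general d hd s hs Ω O hΩb hOb
  exact ⟨C, hC0, fun φ hφ => hC φ (hφ.of_le (by exact_mod_cast le_top))⟩

end
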